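/- arXiv:1501.02360 — 3 statements merged into one kernel-verified Lean document; each statement's English description precedes it below -/
import Mathlib

section
/- Let (H, α) be a monoidal Hom-Hopf algebra with bijective antipode, and let H^op⊗H denote the k-module H⊗H with multiplication (h⊗k)(l⊗m) = hl ⊗ mk, unit 1_H⊗1_H, comultiplication (h⊗k) ↦ (h₁⊗k₁)⊗(h₂⊗k₂), counit (h⊗k) ↦ ε(h)ε(k), and invertible map α⊗α. Then H, with invertible map α and action c ◁ (h⊗k) = α(k)(α⁻¹(c)h) for c, h, k ∈ H, is a right (H^op⊗H)-Hom-module, i.e. [c ◁ (h⊗k)] ◁ (α(l)⊗α(m)) = α(c) ◁ (hl⊗mk), c ◁ (1_H⊗1_H) = α(c), and α(c ◁ (h⊗k)) = α(c) ◁ (α(h)⊗α(k)); moreover Δ(c ◁ (h⊗k)) = (c₁ ◁ (h₁⊗k₁)) ⊗ (c₂ ◁ (h₂⊗k₂)) and ε(c ◁ (h⊗k)) = ε(c)ε(h)ε(k), so that H is a right H^op⊗H-Hom-module coalgebra. -/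
open TensorProduct

namespace DoiHomHopf

/-- A monoidal Hom-algebra `(A, β)`. -/
structure HomAlg (k : Type*) [CommRing k] (A : Type*) [AddCommGroup A] [Module k A] where
  str : A ≃ₗ[k] A
  mul : A →ₗ[k] A →ₗ[k] A
  one : A
  str_mul : ∀ a b, str (mul a b) = mul (str a) (str b)
  str_one : str one = one
  hom_assoc : ∀ a b c, mul (str a) (mul b c) = mul (mul a b) (str c)
  mul_one : ∀ a, mul a one = str a
  one_mul : ∀ a, mul one a = str a

/-- A monoidal Hom-coalgebra `(C, γ)`. -/
structure HomCoalg (k : Type*) [CommRing k] (C : Type*) [AddCommGroup C] [Module k C] where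
  str : C ≃ₗ[k] C
  comul : C →ₗ[k] C ⊗[k] C
  counit : C →ₗ[k] k
  comul_str : ∀ c, comul (str c) = TensorProduct.map str.toLinearMap str.toLinearMap (comul c)
  counit_str : ∀ c, counit (str c) = counit c
  hom_coassoc : ∀ c,
    TensorProduct.map str.symm.toLinearMap comul (comul c) =
      TensorProduct.assoc k C C C (TensorProduct.map comul str.symm.toLinearMap (comul c))
  counit_comul_left : ∀ c,
    TensorProduct.lid k C (TensorProduct.map counit LinearMap.id (comul c)) = str.symm c
  counit_comul_right : ∀ c,
    TensorProduct.rid k C (TensorProduct.map LinearMap.id counit (comul c)) = str.symm c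

/-- A monoidal Hom-bialgebra. -/
structure HomBialg (k : Type*) [CommRing k] (H : Type*) [AddCommGroup H] [Module k H]
    extends HomAlg k H, HomCoalg k H where
  comul_mul : ∀ a b, comul (mul a b) = TensorProduct.map₂ mul mul (comul a) (comul b)
  comul_one : comul one = one ⊗ₜ[k] one
  counit_mul : ∀ a b, counit (mul a b) = counit a * counit b
  counit_one : counit one = 1

/-- A monoidal Hom-Hopf algebra `(H, α)` with antipode `S`. -/
structure HomHopf (k : Type*) [CommRing k] (H : Type*) [AddCommGroup H] [Module k H]
    extends HomBialg k H where
  S : H →ₗ[k] H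
  S_mul_comul : ∀ h,
    TensorProduct.lift mul (TensorProduct.map S LinearMap.id (comul h)) = counit h • one
  mul_S_comul : ∀ h,
    TensorProduct.lift mul (TensorProduct.map LinearMap.id S (comul h)) = counit h • one
  S_str : ∀ h, S (str h) = str (S h)

/-- A right `(A, β)`-Hom-module `(M, μ)`. -/
structure HomMod {k : Type*} [CommRing k] {A : Type*} [AddCommGroup A] [Module k A]
    (hA : HomAlg k A) (M : Type*) [AddCommGroup M] [Module k M] where
  str : M ≃ₗ[k] M
  act : M →ₗ[k] A →ₗ[k] M
  act_act : ∀ m a b, act (act m a) (hA.str b) = act (str m) (hA.mul a b)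
  act_one : ∀ m, act m hA.one = str m
  str_act : ∀ m a, str (act m a) = act (str m) (hA.str a)

/-- A right `(C, γ)`-Hom-comodule `(M, μ)`. -/
structure HomComod {k : Type*} [CommRing k] {C : Type*} [AddCommGroup C] [Module k C]
    (hC : HomCoalg k C) (M : Type*) [AddCommGroup M] [Module k M] where
  str : M ≃ₗ[k] M
  coact : M →ₗ[k] M ⊗[k] C
  hom_coassoc : ∀ m,
    TensorProduct.assoc k M C C
        (TensorProduct.map coact hC.str.symm.toLinearMap (coact m)) =
      TensorProduct.map str.symm.toLinearMap hC.comul (coact m)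
  counit_coact : ∀ m,
    TensorProduct.rid k M (TensorProduct.map LinearMap.id hC.counit (coact m)) = str.symm m
  coact_str : ∀ m, coact (str m) = TensorProduct.map str.toLinearMap hC.str.toLinearMap (coact m)

/-- A right `(H, α)`-Hom-comodule algebra `(A, β)`. -/
structure HomComodAlg {k : Type*} [CommRing k] {H : Type*} [AddCommGroup H] [Module k H]
    (hH : HomBialg k H) (A : Type*) [AddCommGroup A] [Module k A] extends HomAlg k A where
  coact : A →ₗ[k] A ⊗[k] H
  hom_coassoc : ∀ a,
    TensorProduct.assoc k A H H
        (TensorProduct.map coact hH.str.symm.toLinearMap (coact a)) =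
      TensorProduct.map str.symm.toLinearMap hH.comul (coact a)
  counit_coact : ∀ a,
    TensorProduct.rid k A (TensorProduct.map LinearMap.id hH.counit (coact a)) = str.symm a
  coact_str : ∀ a, coact (str a) = TensorProduct.map str.toLinearMap hH.str.toLinearMap (coact a)
  coact_mul : ∀ a b, coact (mul a b) = TensorProduct.map₂ mul hH.mul (coact a) (coact b)
  coact_one : coact one = one ⊗ₜ[k] hH.one

/-- A right `(H, α)`-Hom-module coalgebra `(C, γ)`. -/
structure HomModCoalg {k : Type*} [CommRing k] {H : Type*} [AddCommGroup H] [Module k H]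
    (hH : HomBialg k H) (C : Type*) [AddCommGroup C] [Module k C] extends HomCoalg k C where
  act : C →ₗ[k] H →ₗ[k] C
  act_act : ∀ c h g, act (act c h) (hH.str g) = act (str c) (hH.mul h g)
  act_one : ∀ c, act c hH.one = str c
  str_act : ∀ c h, str (act c h) = act (str c) (hH.str h)
  comul_act : ∀ c h, comul (act c h) = TensorProduct.map₂ act act (comul c) (hH.comul h)
  counit_act : ∀ c h, counit (act c h) = counit c * hH.counit h

/-- A Doi Hom-Hopf module `(M, μ)` over the Doi Hom-Hopf datum `(H, A, C)`. -/
structure DoiMod {k : Type*} [CommRing k] {H A C : Type*}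
    [AddCommGroup H] [Module k H] [AddCommGroup A] [Module k A] [AddCommGroup C] [Module k C]
    {hH : HomBialg k H} (hA : HomComodAlg hH A) (hC : HomModCoalg hH C)
    (M : Type*) [AddCommGroup M] [Module k M] where
  str : M ≃ₗ[k] M
  act : M →ₗ[k] A →ₗ[k] M
  coact : M →ₗ[k] M ⊗[k] C
  act_act : ∀ m a b, act (act m a) (hA.str b) = act (str m) (hA.mul a b)
  act_one : ∀ m, act m hA.one = str m
  str_act : ∀ m a, str (act m a) = act (str m) (hA.str a)
  hom_coassoc : ∀ m,
    TensorProduct.assoc k M C C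
        (TensorProduct.map coact hC.str.symm.toLinearMap (coact m)) =
      TensorProduct.map str.symm.toLinearMap hC.comul (coact m)
  counit_coact : ∀ m,
    TensorProduct.rid k M (TensorProduct.map LinearMap.id hC.counit (coact m)) = str.symm m
  coact_str : ∀ m, coact (str m) = TensorProduct.map str.toLinearMap hC.str.toLinearMap (coact m)
  compat : ∀ m a,
    coact (act m a) = TensorProduct.map₂ act hC.act (coact m) (hA.coact a)

/-- `f` is a morphism of Doi Hom-Hopf modules. -/
structure IsDoiHom {k : Type*} [CommRing k] {H A C : Type*}
    [AddCommGroup H] [Module k H] [AddCommGroup A] [Module k A] [AddCommGroup C] [Module k C]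
    {hH : HomBialg k H} {hA : HomComodAlg hH A} {hC : HomModCoalg hH C}
    {M N : Type*} [AddCommGroup M] [Module k M] [AddCommGroup N] [Module k N]
    (dM : DoiMod hA hC M) (dN : DoiMod hA hC N) (f : M →ₗ[k] N) : Prop where
  str_comm : ∀ m, f (dM.str m) = dN.str (f m)
  act_comm : ∀ m a, f (dM.act m a) = dN.act (f m) a
  coact_comm : ∀ m, dN.coact (f m) = TensorProduct.map f LinearMap.id (dM.coact m)

/-- A normalized `(A, β)`-integral `θ : C ⊗ C → A` for the Doi Hom-Hopf datum `(H, A, C)`. -/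
structure NIntegral {k : Type*} [CommRing k] {H A C : Type*}
    [AddCommGroup H] [Module k H] [AddCommGroup A] [Module k A] [AddCommGroup C] [Module k C]
    {hH : HomBialg k H} (hA : HomComodAlg hH A) (hC : HomModCoalg hH C) where
  θ : C ⊗[k] C →ₗ[k] A
  θ_str : ∀ c d, θ (hC.str c ⊗ₜ[k] hC.str d) = hA.str (θ (c ⊗ₜ[k] d))
  cond1 : ∀ c d : C,
    TensorProduct.map (TensorProduct.curry θ (hC.str.symm d)) hC.str.toLinearMap (hC.comul c) =
      TensorProduct.map hA.str.toLinearMap (TensorProduct.lift hC.act)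
        ((TensorProduct.assoc k A C H)
          (TensorProduct.map (TensorProduct.comm k C A).toLinearMap LinearMap.id
            ((TensorProduct.assoc k C A H).symm
              (TensorProduct.map LinearMap.id
                (hA.coact ∘ₗ (TensorProduct.curry θ).flip (hC.str.symm c)) (hC.comul d)))))
  cond2 : ∀ c, θ (hC.comul c) = hC.counit c • hA.one
  cond3 : ∀ (a : A) (c d : C),
    TensorProduct.lift hA.mul
      (TensorProduct.map LinearMap.id θ
        ((TensorProduct.assoc k A C C)
          (TensorProduct.map
            (TensorProduct.map (hA.str.toLinearMap ∘ₗ hA.str.toLinearMap)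
              (hC.act (hC.str.symm d)))
            (hC.act (hC.str.symm c))
            (TensorProduct.map hA.coact hH.str.symm.toLinearMap (hA.coact a))))) =
      hA.mul (θ (d ⊗ₜ[k] c)) a

/-- The right `A`-action on `M ⊗ C` given by `(m ⊗ c) · a = m · a₀ ⊗ c · a₁`. -/
noncomputable def Gact {k : Type*} [CommRing k] {H A C : Type*}
    [AddCommGroup H] [Module k H] [AddCommGroup A] [Module k A] [AddCommGroup C] [Module k C]
    {hH : HomBialg k H} (hA : HomComodAlg hH A) (hC : HomModCoalg hH C)
    {M : Type*} [AddCommGroup M] [Module k M] (act : M →ₗ[k] A →ₗ[k] M) :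
    (M ⊗[k] C) →ₗ[k] A →ₗ[k] (M ⊗[k] C) :=
  (TensorProduct.map₂ act hC.act).compl₂ hA.coact

/-- The right `C`-coaction on `M ⊗ C` given by `ρ(m ⊗ c) = (μ⁻¹(m) ⊗ c₁) ⊗ γ(c₂)`. -/
noncomputable def Gcoact {k : Type*} [CommRing k] {C : Type*} [AddCommGroup C] [Module k C]
    (hC : HomCoalg k C) {M : Type*} [AddCommGroup M] [Module k M] (str : M ≃ₗ[k] M) :
    (M ⊗[k] C) →ₗ[k] (M ⊗[k] C) ⊗[k] C :=
  (TensorProduct.assoc k M C C).symm.toLinearMap ∘ₗ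
    TensorProduct.map str.symm.toLinearMap
      (TensorProduct.map LinearMap.id hC.str.toLinearMap ∘ₗ hC.comul)

/-- The counit of the adjunction: `δ_N(n ⊗ c) = ε(c) ν(n)`. -/
noncomputable def deltaMap {k : Type*} [CommRing k] {C : Type*} [AddCommGroup C] [Module k C]
    (hC : HomCoalg k C) {N : Type*} [AddCommGroup N] [Module k N] (str : N ≃ₗ[k] N) :
    (N ⊗[k] C) →ₗ[k] N :=
  str.toLinearMap ∘ₗ (TensorProduct.rid k N).toLinearMap ∘ₗ
    TensorProduct.map LinearMap.id hC.counit

/-- The map `ν_M : M ⊗ C → M`, `ν_M(m ⊗ c) = μ(m₀) · θ(m₁ ⊗ γ⁻¹(c))`. -/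
noncomputable def nuMap {k : Type*} [CommRing k] {H A C : Type*}
    [AddCommGroup H] [Module k H] [AddCommGroup A] [Module k A] [AddCommGroup C] [Module k C]
    {hH : HomBialg k H} {hA : HomComodAlg hH A} {hC : HomModCoalg hH C}
    {M : Type*} [AddCommGroup M] [Module k M]
    (θ : C ⊗[k] C →ₗ[k] A) (d : DoiMod hA hC M) : (M ⊗[k] C) →ₗ[k] M :=
  TensorProduct.lift d.act ∘ₗ TensorProduct.map d.str.toLinearMap θ ∘ₗ
    (TensorProduct.assoc k M C C).toLinearMap ∘ₗ
    TensorProduct.map d.coact hC.str.symm.toLinearMap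

end DoiHomHopf

open DoiHomHopf

/-- The multiplication of `H^op ⊗ H`: `(h ⊗ k)(l ⊗ m) = hl ⊗ mk`. -/
noncomputable def opMul {k : Type*} [CommRing k] {H : Type*} [AddCommGroup H] [Module k H]
    (hH : HomHopf k H) : (H ⊗[k] H) →ₗ[k] (H ⊗[k] H) →ₗ[k] (H ⊗[k] H) :=
  TensorProduct.map₂ hH.mul hH.mul.flip

/-- The comultiplication of `H^op ⊗ H`: `(h ⊗ k) ↦ (h₁ ⊗ k₁) ⊗ (h₂ ⊗ k₂)`. -/
noncomputable def opComul {k : Type*} [CommRing k] {H : Type*} [AddCommGroup H] [Module k H]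
    (hH : HomHopf k H) : (H ⊗[k] H) →ₗ[k] (H ⊗[k] H) ⊗[k] (H ⊗[k] H) :=
  (TensorProduct.tensorTensorTensorComm k H H H H).toLinearMap ∘ₗ
    TensorProduct.map hH.comul hH.comul

/-- The counit of `H^op ⊗ H`: `(h ⊗ k) ↦ ε(h)ε(k)`. -/
noncomputable def opCounit {k : Type*} [CommRing k] {H : Type*} [AddCommGroup H] [Module k H]
    (hH : HomHopf k H) : (H ⊗[k] H) →ₗ[k] k :=
  (TensorProduct.lid k k).toLinearMap ∘ₗ TensorProduct.map hH.counit hH.counit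

/-- The coaction of `H^op ⊗ H` on `H`: `h ↦ α((h₂)₁) ⊗ ((h₂)₂ ⊗ S(α⁻¹(h₁)))`. -/
noncomputable def opCoact {k : Type*} [CommRing k] {H : Type*} [AddCommGroup H] [Module k H]
    (hH : HomHopf k H) : H →ₗ[k] H ⊗[k] (H ⊗[k] H) :=
  TensorProduct.map hH.str.toLinearMap LinearMap.id ∘ₗ
    (TensorProduct.assoc k H H H).toLinearMap ∘ₗ
    (TensorProduct.comm k H (H ⊗[k] H)).toLinearMap ∘ₗ
    TensorProduct.map (hH.S ∘ₗ hH.str.symm.toLinearMap) hH.comul ∘ₗ hH.comul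

/-- The action of `H^op ⊗ H` on `H`: `c ◁ (h ⊗ k) = α(k)(α⁻¹(c)h)`. -/
noncomputable def opAct {k : Type*} [CommRing k] {H : Type*} [AddCommGroup H] [Module k H]
    (hH : HomHopf k H) : H →ₗ[k] (H ⊗[k] H) →ₗ[k] H :=
  TensorProduct.curry (TensorProduct.lift hH.mul.flip ∘ₗ
    TensorProduct.map (TensorProduct.lift (hH.mul ∘ₗ hH.str.symm.toLinearMap))
      hH.str.toLinearMap ∘ₗ
    (TensorProduct.assoc k H H H).symm.toLinearMap)

namespace DoiHomHopf

variable {k : Type*} [CommRing k]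

namespace HomAlg

variable {A B : Type*} [AddCommGroup A] [Module k A] [AddCommGroup B] [Module k B]
  (hA : HomAlg k A) (hB : HomAlg k B)

theorem str_symm_mul (a b : A) :
    hA.str.symm (hA.mul a b) = hA.mul (hA.str.symm a) (hA.str.symm b) := by
  simp only [LinearEquiv.symm_apply_eq, hA.str_mul, LinearEquiv.apply_symm_apply]

/-- The two-sided multiplication action `c ◁ (h ⊗ g) = β(g)(β⁻¹(c)h)` of `A ⊗ A` on `A`, for an
arbitrary monoidal Hom-algebra `(A, β)`. For the algebra underlying a monoidal Hom-Hopf algebra it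
is definitionally `opAct`. -/
noncomputable def twoSidedAct : A →ₗ[k] (A ⊗[k] A) →ₗ[k] A :=
  TensorProduct.curry (TensorProduct.lift hA.mul.flip ∘ₗ
    TensorProduct.map (TensorProduct.lift (hA.mul ∘ₗ hA.str.symm.toLinearMap))
      hA.str.toLinearMap ∘ₗ
    (TensorProduct.assoc k A A A).symm.toLinearMap)

@[simp]
theorem twoSidedAct_tmul (c h g : A) :
    hA.twoSidedAct c (h ⊗ₜ[k] g) = hA.mul (hA.str g) (hA.mul (hA.str.symm c) h) := rfl

theorem twoSidedAct_one_tmul_one (c : A) :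
    hA.twoSidedAct c (hA.one ⊗ₜ[k] hA.one) = hA.str c := by
  rw [twoSidedAct_tmul, hA.mul_one, hA.str_one, hA.one_mul, LinearEquiv.apply_symm_apply]

theorem str_twoSidedAct (c : A) (x : A ⊗[k] A) :
    hA.str (hA.twoSidedAct c x) =
      hA.twoSidedAct (hA.str c) (TensorProduct.congr hA.str hA.str x) := by
  induction x with
  | zero => simp only [map_zero]
  | add x y hx hy => simp only [map_add, hx, hy]
  | tmul h g =>
    simp only [TensorProduct.congr_tmul, twoSidedAct_tmul, hA.str_mul,
      LinearEquiv.symm_apply_apply, LinearEquiv.apply_symm_apply]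

theorem twoSidedAct_twoSidedAct_tmul (c h g l m : A) :
    hA.twoSidedAct (hA.twoSidedAct c (h ⊗ₜ[k] g)) (hA.str l ⊗ₜ[k] hA.str m) =
      hA.twoSidedAct (hA.str c) (hA.mul h l ⊗ₜ[k] hA.mul m g) := by
  -- Writing `c = β²(a)` and `h = β(b)` removes every inverse of `β`.
  obtain ⟨c', rfl⟩ := hA.str.surjective c
  obtain ⟨a, rfl⟩ := hA.str.surjective c'
  obtain ⟨b, rfl⟩ := hA.str.surjective h
  simp only [twoSidedAct_tmul, str_symm_mul, LinearEquiv.symm_apply_apply]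
  calc hA.mul (hA.str (hA.str m)) (hA.mul (hA.mul g (hA.mul a b)) (hA.str l))
    _ = hA.mul (hA.str (hA.str m)) (hA.mul (hA.str g) (hA.mul (hA.mul a b) l)) := by
      rw [hA.hom_assoc g]
    _ = hA.mul (hA.mul (hA.str m) (hA.str g)) (hA.str (hA.mul (hA.mul a b) l)) := by
      rw [hA.hom_assoc (hA.str m)]
    _ = hA.mul (hA.str (hA.mul m g)) (hA.mul (hA.mul (hA.str a) (hA.str b)) (hA.str l)) := by
      simp only [hA.str_mul]
    _ = hA.mul (hA.str (hA.mul m g)) (hA.mul (hA.str (hA.str a)) (hA.mul (hA.str b) l)) := by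
      rw [hA.hom_assoc (hA.str a)]

theorem twoSidedAct_twoSidedAct (c : A) (x y : A ⊗[k] A) :
    hA.twoSidedAct (hA.twoSidedAct c x) (TensorProduct.congr hA.str hA.str y) =
      hA.twoSidedAct (hA.str c) (TensorProduct.map₂ hA.mul hA.mul.flip x y) := by
  induction x with
  | zero => simp only [map_zero, LinearMap.zero_apply]
  | add x x' hx hx' => simp only [map_add, LinearMap.add_apply, hx, hx']
  | tmul h g =>
    induction y with
    | zero => simp only [map_zero]
    | add y y' hy hy' => simp only [map_add, hy, hy']
    | tmul l m => exact hA.twoSidedAct_twoSidedAct_tmul c h g l m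

theorem map₂_twoSidedAct_tensorTensorTensorComm (x y z : A ⊗[k] B) :
    TensorProduct.map₂ hA.twoSidedAct hB.twoSidedAct x
        (TensorProduct.tensorTensorTensorComm k A B A B (y ⊗ₜ[k] z)) =
      TensorProduct.map₂ hA.mul hB.mul
        (TensorProduct.map hA.str.toLinearMap hB.str.toLinearMap z)
        (TensorProduct.map₂ hA.mul hB.mul
          (TensorProduct.map hA.str.symm.toLinearMap hB.str.symm.toLinearMap x) y) := by
  induction x with
  | zero => simp only [map_zero, LinearMap.zero_apply]
  | add x x' hx hx' => simp only [map_add, LinearMap.add_apply, hx, hx']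
  | tmul c d =>
    induction y with
    | zero => simp only [map_zero, TensorProduct.zero_tmul]
    | add y y' hy hy' => simp only [map_add, TensorProduct.add_tmul, hy, hy']
    | tmul h h' =>
      induction z with
      | zero => simp only [map_zero, TensorProduct.tmul_zero, LinearMap.zero_apply]
      | add z z' hz hz' =>
        simp only [map_add, TensorProduct.tmul_add, LinearMap.add_apply, hz, hz']
      | tmul g g' => rfl

end HomAlg

namespace HomCoalg

variable {C : Type*} [AddCommGroup C] [Module k C] (hC : HomCoalg k C)

theorem comul_str_symm (c : C) :
    hC.comul (hC.str.symm c) =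
      TensorProduct.map hC.str.symm.toLinearMap hC.str.symm.toLinearMap (hC.comul c) := by
  obtain ⟨d, rfl⟩ := hC.str.surjective c
  rw [hC.comul_str, LinearEquiv.symm_apply_apply]
  exact ((TensorProduct.congr hC.str hC.str).symm_apply_apply (hC.comul d)).symm

theorem counit_str_symm (c : C) : hC.counit (hC.str.symm c) = hC.counit c := by
  rw [← hC.counit_str, LinearEquiv.apply_symm_apply]

end HomCoalg

namespace HomBialg

variable {H : Type*} [AddCommGroup H] [Module k H] (hH : HomBialg k H)

theorem comul_twoSidedAct (c : H) (x : H ⊗[k] H) :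
    hH.comul (hH.twoSidedAct c x) =
      TensorProduct.map₂ hH.twoSidedAct hH.twoSidedAct (hH.comul c)
        (TensorProduct.tensorTensorTensorComm k H H H H
          (TensorProduct.map hH.comul hH.comul x)) := by
  induction x with
  | zero => simp only [map_zero]
  | add x y hx hy => simp only [map_add, hx, hy]
  | tmul h g =>
    rw [HomAlg.twoSidedAct_tmul, hH.comul_mul, hH.comul_mul, hH.comul_str,
      hH.toHomCoalg.comul_str_symm, TensorProduct.map_tmul,
      HomAlg.map₂_twoSidedAct_tensorTensorTensorComm]

theorem counit_twoSidedAct (c : H) (x : H ⊗[k] H) :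
    hH.counit (hH.twoSidedAct c x) =
      hH.counit c * TensorProduct.lid k k (TensorProduct.map hH.counit hH.counit x) := by
  induction x with
  | zero => simp only [map_zero, mul_zero]
  | add x y hx hy => simp only [map_add, mul_add, hx, hy]
  | tmul h g =>
    rw [HomAlg.twoSidedAct_tmul, hH.counit_mul, hH.counit_mul, hH.counit_str,
      hH.toHomCoalg.counit_str_symm, TensorProduct.map_tmul, TensorProduct.lid_tmul, smul_eq_mul]
    ring

end HomBialg

end DoiHomHopf

theorem opTensor_module_coalgebra_general {k : Type*} [CommRing k] {H : Type*}
    [AddCommGroup H] [Module k H] (hH : HomBialg k H) (hD : HomBialg k (H ⊗[k] H))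
    (hD_str : hD.str = TensorProduct.congr hH.str hH.str)
    (hD_mul : hD.mul = TensorProduct.map₂ hH.mul hH.mul.flip)
    (hD_one : hD.one = hH.one ⊗ₜ[k] hH.one)
    (hD_comul : hD.comul = (TensorProduct.tensorTensorTensorComm k H H H H).toLinearMap ∘ₗ
      TensorProduct.map hH.comul hH.comul)
    (hD_counit : hD.counit =
      (TensorProduct.lid k k).toLinearMap ∘ₗ TensorProduct.map hH.counit hH.counit) :
    ∃ mc : HomModCoalg hD H,
      mc.str = hH.str ∧ mc.comul = hH.comul ∧ mc.counit = hH.counit ∧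
        mc.act = hH.twoSidedAct :=
  ⟨{ toHomCoalg := hH.toHomCoalg
     act := hH.twoSidedAct
     act_act := by rw [hD_str, hD_mul]; exact hH.twoSidedAct_twoSidedAct
     act_one := by rw [hD_one]; exact hH.twoSidedAct_one_tmul_one
     str_act := by rw [hD_str]; exact hH.str_twoSidedAct
     comul_act := by rw [hD_comul]; exact hH.comul_twoSidedAct
     counit_act := by rw [hD_counit]; exact hH.counit_twoSidedAct }, rfl, rfl, rfl, rfl⟩

/-- `H` with the action `c ◁ (h ⊗ k) = α(k)(α⁻¹(c)h)` is a right
`H^op ⊗ H`-Hom-module coalgebra. -/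
theorem opTensor_module_coalgebra {k : Type*} [CommRing k] {H : Type*}
    [AddCommGroup H] [Module k H] (hH : HomHopf k H) (hS : Function.Bijective hH.S)
    (hD : HomBialg k (H ⊗[k] H))
    (hD_str : hD.str = TensorProduct.congr hH.str hH.str)
    (hD_mul : hD.mul = opMul hH)
    (hD_one : hD.one = hH.one ⊗ₜ[k] hH.one)
    (hD_comul : hD.comul = opComul hH)
    (hD_counit : hD.counit = opCounit hH) :
    ∃ mc : HomModCoalg hD H,
      mc.str = hH.str ∧ mc.comul = hH.comul ∧ mc.counit = hH.counit ∧ mc.act = opAct hH :=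
  opTensor_module_coalgebra_general hH.toHomBialg hD hD_str hD_mul hD_one hD_comul hD_counit
end

section
/- Let (H, α) be a monoidal Hom-Hopf algebra with bijective antipode S. Consider H^op⊗H (the k-module H⊗H with multiplication (h⊗k)(l⊗m) = hl⊗mk, unit 1⊗1, componentwise comultiplication, counit ε⊗ε and map α⊗α), H as a right H^op⊗H-Hom-comodule algebra via ρ(h) = α((h₂)₁) ⊗ ((h₂)₂ ⊗ S(α⁻¹(h₁))), and H as a right H^op⊗H-Hom-module coalgebra via c ◁ (h⊗k) = α(k)(α⁻¹(c)h). Then for a k-module M with an invertible k-linear map μ that is a right (H,α)-Hom-module and a right (H,α)-Hom-comodule, M is a Doi Hom-Hopf module over the Doi Hom-Hopf datum (H^op⊗H, H, H) if and only if M is a right-right Hom-Yetter-Drinfeld module, i.e. m₀·h₁ ⊗ m₁h₂ = μ((μ⁻¹(m)·h₂)₀) ⊗ h₁(μ⁻¹(m)·h₂)₁ for all m ∈ M, h ∈ H. -/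
open TensorProduct

open DoiHomHopf

/-!
Write `V = M ⊗ H`, a left Hom-module over `H` through the second factor, and let `*` denote the
convolution of linear maps out of `H`. For fixed `m`, put `R h = ρ(m · h)` and
`P h = m₀ · h₁ ⊗ m₁ h₂`, and let `T` be conjugation of maps `H → V` by the structure maps. The Doi
condition at `m` reads `S * T⁻¹ P = R`, and the Yetter-Drinfeld condition at `μ m` reads
`id * R = T P` once `μ ⊗ id` is cancelled. As `S` and `id` are convolution inverse and convolution
is Hom-associative, these are equivalent.
-/

namespace DoiHomHopf

attribute [ext] HomAlg HomCoalg

section Convolution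

variable {k : Type*} [CommRing k] {A C V W U : Type*}
  [AddCommGroup A] [Module k A] [AddCommGroup C] [Module k C]
  [AddCommGroup V] [Module k V] [AddCommGroup W] [Module k W] [AddCommGroup U] [Module k U]

theorem HomAlg.str_symm_mul_s16 (hA : HomAlg k A) (a b : A) :
    hA.str.symm (hA.mul a b) = hA.mul (hA.str.symm a) (hA.str.symm b) := by
  simp [LinearEquiv.symm_apply_eq, hA.str_mul]

/-- A left `(A, β)`-Hom-module `(V, ν)`, the mirror image of `HomMod`. -/
structure LeftHomMod (hA : HomAlg k A) (V : Type*) [AddCommGroup V] [Module k V] where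
  str : V ≃ₗ[k] V
  act : A →ₗ[k] V →ₗ[k] V
  act_act : ∀ a b v, act (hA.str a) (act b v) = act (hA.mul a b) (str v)
  one_act : ∀ v, act hA.one v = str v
  str_act : ∀ a v, str (act a v) = act (hA.str a) (str v)

/-- The left Hom-module `M ⊗ A` with action `a · (m ⊗ b) = m ⊗ ab` and structure map `id ⊗ β`. -/
noncomputable def HomAlg.tensorLeftHomMod (hA : HomAlg k A) (M : Type*) [AddCommGroup M]
    [Module k M] : LeftHomMod hA (M ⊗[k] A) where
  str := LinearEquiv.lTensor M hA.str
  act := LinearMap.lTensorHom M ∘ₗ hA.mul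
  act_act a b v := by
    induction v with
    | zero => simp
    | add v w hv hw => simp only [map_add, hv, hw]
    | tmul m c => simp [hA.hom_assoc]
  one_act v := by
    induction v with
    | zero => simp
    | add v w hv hw => simp only [map_add, hv, hw]
    | tmul m c => simp [hA.one_mul]
  str_act a v := by
    induction v with
    | zero => simp
    | add v w hv hw => simp only [map_add, hv, hw]
    | tmul m c => simp [hA.str_mul]

theorem HomAlg.map_lift_mul_leftComm (hA : HomAlg k A) (f : V →ₗ[k] W)
    (x : A ⊗[k] (V ⊗[k] A)) :
    TensorProduct.map f (TensorProduct.lift hA.mul)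
        ((TensorProduct.assoc k V A A)
          (TensorProduct.map (TensorProduct.comm k A V).toLinearMap LinearMap.id
            ((TensorProduct.assoc k A V A).symm x))) =
      LinearMap.rTensor A f (TensorProduct.lift (hA.tensorLeftHomMod V).act x) := by
  have maps_eq : TensorProduct.map f (TensorProduct.lift hA.mul) ∘ₗ
        (TensorProduct.assoc k V A A).toLinearMap ∘ₗ
        TensorProduct.map (TensorProduct.comm k A V).toLinearMap LinearMap.id ∘ₗ
        (TensorProduct.assoc k A V A).symm.toLinearMap =
      LinearMap.rTensor A f ∘ₗ TensorProduct.lift (hA.tensorLeftHomMod V).act := by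
    ext a v b
    simp [tensorLeftHomMod]
  exact LinearMap.congr_fun maps_eq x

/-- The convolution `c ↦ b(f(c₁), g(c₂))` of `f` and `g` along a bilinear map `b`. -/
noncomputable def HomCoalg.conv (hC : HomCoalg k C) (b : U →ₗ[k] V →ₗ[k] W)
    (f : C →ₗ[k] U) (g : C →ₗ[k] V) : C →ₗ[k] W :=
  TensorProduct.lift b ∘ₗ TensorProduct.map f g ∘ₗ hC.comul

namespace LeftHomMod

variable {hA : HomAlg k A} (hC : HomCoalg k C) (hV : LeftHomMod hA V)

/-- The conjugation `N ↦ ν ∘ N ∘ γ⁻¹` of linear maps `C → V` by the structure maps. -/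
noncomputable def conj : (C →ₗ[k] V) ≃ₗ[k] (C →ₗ[k] V) :=
  LinearEquiv.arrowCongr hC.str hV.str

theorem conv_conv {f : C →ₗ[k] A} (hf : ∀ c, f (hC.str c) = hA.str (f c))
    (g : C →ₗ[k] A) (N : C →ₗ[k] V) :
    hC.conv hV.act f (hC.conv hV.act g N) =
      hC.conv hV.act (hC.conv hA.mul f g) (hV.conj hC N) := by
  let Φ : C ⊗[k] (C ⊗[k] C) →ₗ[k] V :=
    TensorProduct.lift hV.act ∘ₗ
      TensorProduct.map (TensorProduct.lift hA.mul ∘ₗ TensorProduct.map f g)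
        (hV.str.toLinearMap ∘ₗ N) ∘ₗ
      (TensorProduct.assoc k C C C).symm.toLinearMap
  have iterated_act : TensorProduct.lift hV.act ∘ₗ
        TensorProduct.map f (TensorProduct.lift hV.act ∘ₗ TensorProduct.map g N) =
      Φ ∘ₗ TensorProduct.map hC.str.symm.toLinearMap LinearMap.id := by
    ext a b c
    obtain ⟨a, rfl⟩ := hC.str.surjective a
    simp [Φ, hf, hV.act_act]
  have left_eq : TensorProduct.lift hV.act ∘ₗ TensorProduct.map f (hC.conv hV.act g N) =
      Φ ∘ₗ TensorProduct.map hC.str.symm.toLinearMap hC.comul := by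
    have := congrArg (· ∘ₗ TensorProduct.map LinearMap.id hC.comul) iterated_act
    simpa [LinearMap.comp_assoc, ← TensorProduct.map_comp, HomCoalg.conv] using this
  have right_eq : Φ ∘ₗ (TensorProduct.assoc k C C C).toLinearMap ∘ₗ
        TensorProduct.map hC.comul hC.str.symm.toLinearMap =
      TensorProduct.lift hV.act ∘ₗ
        TensorProduct.map (hC.conv hA.mul f g) (hV.conj hC N) := by
    ext a b
    simp [Φ, HomCoalg.conv, conj]
  ext c
  calc hC.conv hV.act f (hC.conv hV.act g N) c
      = Φ (TensorProduct.map hC.str.symm.toLinearMap hC.comul (hC.comul c)) :=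
        LinearMap.congr_fun left_eq (hC.comul c)
    _ = Φ (TensorProduct.assoc k C C C
          (TensorProduct.map hC.comul hC.str.symm.toLinearMap (hC.comul c))) := by
        rw [hC.hom_coassoc]
    _ = hC.conv hV.act (hC.conv hA.mul f g) (hV.conj hC N) c :=
        LinearMap.congr_fun right_eq (hC.comul c)

theorem counit_smulRight_one_conv (N : C →ₗ[k] V) :
    hC.conv hV.act (hC.counit.smulRight hA.one) N = hV.conj hC N := by
  have act_counit : TensorProduct.lift hV.act ∘ₗ
        TensorProduct.map (hC.counit.smulRight hA.one) N =
      hV.str.toLinearMap ∘ₗ N ∘ₗ (TensorProduct.lid k C).toLinearMap ∘ₗ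
        TensorProduct.map hC.counit LinearMap.id := by
    ext a b
    simp [hV.one_act]
  ext c
  have := LinearMap.congr_fun act_counit (hC.comul c)
  simpa [HomCoalg.conv, conj, hC.counit_comul_left] using this

theorem conj_conv {f : C →ₗ[k] A} (hf : ∀ c, f (hC.str c) = hA.str (f c)) (N : C →ₗ[k] V) :
    hV.conj hC (hC.conv hV.act f N) = hC.conv hV.act f (hV.conj hC N) := by
  have str_lift : hV.str.toLinearMap ∘ₗ TensorProduct.lift hV.act ∘ₗ TensorProduct.map f N =
      TensorProduct.lift hV.act ∘ₗ TensorProduct.map f (hV.conj hC N) ∘ₗ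
        TensorProduct.map hC.str.toLinearMap hC.str.toLinearMap := by
    ext a b
    simp [conj, hf, hV.str_act]
  ext c
  obtain ⟨c, rfl⟩ := hC.str.surjective c
  have := LinearMap.congr_fun str_lift (hC.comul c)
  simpa [HomCoalg.conv, conj, hC.comul_str] using this

theorem conv_conv_of_conv_eq_one {f g : C →ₗ[k] A} (hf : ∀ c, f (hC.str c) = hA.str (f c))
    (hfg : hC.conv hA.mul f g = hC.counit.smulRight hA.one) (N : C →ₗ[k] V) :
    hC.conv hV.act f (hC.conv hV.act g N) = hV.conj hC (hV.conj hC N) := by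
  rw [conv_conv hC hV hf, hfg, counit_smulRight_one_conv]

theorem conv_conj_symm_eq_iff {f g : C →ₗ[k] A}
    (hf : ∀ c, f (hC.str c) = hA.str (f c)) (hg : ∀ c, g (hC.str c) = hA.str (g c))
    (hfg : hC.conv hA.mul f g = hC.counit.smulRight hA.one)
    (hgf : hC.conv hA.mul g f = hC.counit.smulRight hA.one) (N R : C →ₗ[k] V) :
    hC.conv hV.act f ((hV.conj hC).symm N) = R ↔ hC.conv hV.act g R = hV.conj hC N := by
  constructor
  · rintro rfl
    rw [conv_conv_of_conv_eq_one hC hV hg hgf, LinearEquiv.apply_symm_apply]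
  · intro h
    apply (hV.conj hC).injective
    apply (hV.conj hC).injective
    rw [conj_conv hC hV hf, LinearEquiv.apply_symm_apply, conj_conv hC hV hf, ← h,
      conv_conv_of_conv_eq_one hC hV hf hfg]

end LeftHomMod

end Convolution

section DoiModule

variable {k : Type*} [CommRing k] {D A C M : Type*} [AddCommGroup D] [Module k D]
  [AddCommGroup A] [Module k A] [AddCommGroup C] [Module k C] [AddCommGroup M] [Module k M]

theorem exists_doiMod_iff {hD : HomBialg k D} (hA : HomComodAlg hD A) (hC : HomModCoalg hD C)
    {hA' : HomAlg k A} {hC' : HomCoalg k C} (hAA' : hA.toHomAlg = hA')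
    (hCC' : hC.toHomCoalg = hC') (mM : HomMod hA' M) (cM : HomComod hC' M)
    (hstr : cM.str = mM.str) :
    (∃ d : DoiMod hA hC M, d.str = mM.str ∧ d.act = mM.act ∧ d.coact = cM.coact) ↔
      ∀ m a, cM.coact (mM.act m a) = Gact hA hC mM.act (cM.coact m) a := by
  subst hAA' hCC'
  constructor
  · rintro ⟨d, -, hact, hcoact⟩
    rw [← hact, ← hcoact]
    exact d.compat
  · intro compat
    let d : DoiMod hA hC M :=
      { mM with
        coact := cM.coact
        hom_coassoc := hstr ▸ cM.hom_coassoc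
        counit_coact := hstr ▸ cM.counit_coact
        coact_str := hstr ▸ cM.coact_str
        compat := compat }
    exact ⟨d, rfl, rfl, rfl⟩

end DoiModule

section YetterDrinfeld

variable {k : Type*} [CommRing k] {H M : Type*} [AddCommGroup H] [Module k H]
  [AddCommGroup M] [Module k M]

/-- The diagonal action `(m ⊗ c) · h = m · h₁ ⊗ c h₂` of `H` on `M ⊗ H`. -/
noncomputable def HomBialg.diagAct (hH : HomBialg k H) (act : M →ₗ[k] H →ₗ[k] M) :
    (M ⊗[k] H) →ₗ[k] H →ₗ[k] (M ⊗[k] H) :=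
  (TensorProduct.map₂ act hH.mul).compl₂ hH.comul

theorem HomBialg.diagAct_str (hH : HomBialg k H) (mM : HomMod hH.toHomAlg M)
    (t : M ⊗[k] H) (h : H) :
    hH.diagAct mM.act (TensorProduct.map mM.str.toLinearMap hH.str.toLinearMap t) (hH.str h) =
      TensorProduct.map mM.str.toLinearMap hH.str.toLinearMap (hH.diagAct mM.act t h) := by
  simp only [diagAct, LinearMap.compl₂_apply, hH.comul_str]
  generalize hH.comul h = w
  induction w with
  | zero => simp
  | add v w hv hw => simp only [map_add, hv, hw]
  | tmul a b =>
    induction t with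
    | zero => simp
    | add s t hs ht => simp only [map_add, LinearMap.add_apply, hs, ht]
    | tmul m c => simp [mM.str_act, hH.str_mul]

/-- The right-right Hom-Yetter-Drinfeld condition for a fixed `m` and all `h`:
`m₀ · h₁ ⊗ m₁ h₂ = μ((μ⁻¹(m) · h₂)₀) ⊗ h₁ (μ⁻¹(m) · h₂)₁`. -/
def IsYetterDrinfeldAt (hH : HomBialg k H) (mM : HomMod hH.toHomAlg M)
    (cM : HomComod hH.toHomCoalg M) (m : M) : Prop :=
  ∀ h : H,
    TensorProduct.map₂ mM.act hH.mul (cM.coact m) (hH.comul h) =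
      TensorProduct.map mM.str.toLinearMap (TensorProduct.lift hH.mul)
        ((TensorProduct.assoc k M H H)
          (TensorProduct.map (TensorProduct.comm k H M).toLinearMap LinearMap.id
            ((TensorProduct.assoc k H M H).symm
              (TensorProduct.map LinearMap.id (cM.coact ∘ₗ mM.act (mM.str.symm m))
                (hH.comul h)))))

theorem diagAct_coact_str (hH : HomBialg k H) (mM : HomMod hH.toHomAlg M)
    (cM : HomComod hH.toHomCoalg M) (hstr : cM.str = mM.str) (m : M) :
    hH.diagAct mM.act (cM.coact (mM.str m)) =
      LinearMap.rTensor H mM.str.toLinearMap ∘ₗ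
        (hH.tensorLeftHomMod M).conj hH.toHomCoalg (hH.diagAct mM.act (cM.coact m)) := by
  ext h
  obtain ⟨h, rfl⟩ := hH.str.surjective h
  rw [← hstr, cM.coact_str, hstr, hH.diagAct_str]
  simp only [LeftHomMod.conj, HomAlg.tensorLeftHomMod, LinearMap.comp_apply,
    LinearEquiv.arrowCongr_apply, LinearEquiv.symm_apply_apply]
  rw [← LinearMap.rTensor_comp_lTensor]
  rfl

theorem isYetterDrinfeldAt_str_iff (hH : HomBialg k H) (mM : HomMod hH.toHomAlg M)
    (cM : HomComod hH.toHomCoalg M) (hstr : cM.str = mM.str) (m : M) :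
    IsYetterDrinfeldAt hH mM cM (mM.str m) ↔
      hH.toHomCoalg.conv (hH.tensorLeftHomMod M).act LinearMap.id (cM.coact ∘ₗ mM.act m) =
        (hH.tensorLeftHomMod M).conj hH.toHomCoalg (hH.diagAct mM.act (cM.coact m)) := by
  have rTensor_injective : Function.Injective (LinearMap.rTensor H mM.str.toLinearMap) :=
    (LinearEquiv.rTensor H mM.str).injective
  have diag_eq (h : H) := LinearMap.congr_fun (diagAct_coact_str hH mM cM hstr m) h
  rw [LinearMap.ext_iff]
  refine forall_congr' fun h => ?_
  rw [LinearEquiv.symm_apply_apply, HomAlg.map_lift_mul_leftComm]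
  exact (Eq.congr_left (diag_eq h)).trans (rTensor_injective.eq_iff.trans eq_comm)

theorem HomHopf.conv_S_id (hH : HomHopf k H) :
    hH.toHomCoalg.conv hH.mul hH.S LinearMap.id = hH.counit.smulRight hH.one :=
  LinearMap.ext hH.S_mul_comul

theorem HomHopf.conv_id_S (hH : HomHopf k H) :
    hH.toHomCoalg.conv hH.mul LinearMap.id hH.S = hH.counit.smulRight hH.one :=
  LinearMap.ext hH.mul_S_comul

theorem map₂_opAct_opCoact (hH : HomHopf k H) (act : M →ₗ[k] H →ₗ[k] M) (t : M ⊗[k] H) (h : H) :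
    TensorProduct.map₂ act (opAct hH) t (opCoact hH h) =
      hH.toHomCoalg.conv (hH.tensorLeftHomMod M).act hH.S
        (((hH.tensorLeftHomMod M).conj hH.toHomCoalg).symm (hH.diagAct act t)) h := by
  have str_S_symm (x : H) : hH.str (hH.S (hH.str.symm x)) = hH.S x := by
    rw [← hH.S_str, LinearEquiv.apply_symm_apply]
  simp only [opCoact, HomCoalg.conv, LinearMap.comp_apply]
  generalize hH.comul h = w
  induction w with
  | zero => simp
  | add v w hv hw => simp only [map_add, hv, hw]
  | tmul a b =>
    simp only [TensorProduct.map_tmul, LinearMap.comp_apply, TensorProduct.lift.tmul,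
      LeftHomMod.conj, HomBialg.diagAct, LinearEquiv.arrowCongr_symm_apply,
      LinearMap.compl₂_apply, LinearEquiv.coe_coe, hH.comul_str]
    generalize hH.comul b = w
    induction w with
    | zero => simp
    | add v w hv hw => simp only [map_add, TensorProduct.tmul_add, hv, hw]
    | tmul c d =>
      induction t with
      | zero => simp
      | add s t hs ht => simp only [map_add, LinearMap.add_apply, hs, ht]
      | tmul n e => simp [opAct, HomAlg.tensorLeftHomMod, str_S_symm, hH.str_symm_mul_s16]

theorem coact_act_eq_iff_isYetterDrinfeldAt_str (hH : HomHopf k H) (mM : HomMod hH.toHomAlg M)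
    (cM : HomComod hH.toHomCoalg M) (hstr : cM.str = mM.str) (m : M) :
    (∀ h, cM.coact (mM.act m h) =
        TensorProduct.map₂ mM.act (opAct hH) (cM.coact m) (opCoact hH h)) ↔
      IsYetterDrinfeldAt hH.toHomBialg mM cM (mM.str m) := by
  rw [isYetterDrinfeldAt_str_iff _ mM cM hstr,
    ← LeftHomMod.conv_conj_symm_eq_iff hH.toHomCoalg _ hH.S_str
      (g := LinearMap.id) (fun _ => rfl) hH.conv_S_id hH.conv_id_S, eq_comm, LinearMap.ext_iff]
  simp only [map₂_opAct_opCoact, LinearMap.comp_apply]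

end YetterDrinfeld

end DoiHomHopf

theorem doiModule_iff_yetterDrinfeld_general {k : Type*} [CommRing k] {H M : Type*}
    [AddCommGroup H] [Module k H] [AddCommGroup M] [Module k M]
    (hH : HomHopf k H)
    (hD : HomBialg k (H ⊗[k] H))
    (hD_str : hD.str = TensorProduct.congr hH.str hH.str)
    (hD_mul : hD.mul = opMul hH)
    (hD_one : hD.one = hH.one ⊗ₜ[k] hH.one)
    (hD_comul : hD.comul = opComul hH)
    (hD_counit : hD.counit = opCounit hH)
    (hA : HomComodAlg hD H)
    (hA_str : hA.str = hH.str) (hA_mul : hA.mul = hH.mul) (hA_one : hA.one = hH.one)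
    (hA_coact : hA.coact = opCoact hH)
    (hC : HomModCoalg hD H)
    (hC_str : hC.str = hH.str) (hC_comul : hC.comul = hH.comul)
    (hC_counit : hC.counit = hH.counit) (hC_act : hC.act = opAct hH)
    (mM : HomMod hH.toHomBialg.toHomAlg M) (cM : HomComod hH.toHomBialg.toHomCoalg M)
    (hstr : cM.str = mM.str) :
    (∃ d : DoiMod hA hC M, d.str = mM.str ∧ d.act = mM.act ∧ d.coact = cM.coact) ↔
      ∀ m, IsYetterDrinfeldAt hH.toHomBialg mM cM m := by
  have compat_iff (m : M) :
      (∀ h, cM.coact (mM.act m h) = Gact hA hC mM.act (cM.coact m) h) ↔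
        IsYetterDrinfeldAt hH.toHomBialg mM cM (mM.str m) := by
    rw [← coact_act_eq_iff_isYetterDrinfeldAt_str hH mM cM hstr, Gact, hC_act, hA_coact]
    rfl
  rw [exists_doiMod_iff hA hC (HomAlg.ext hA_str hA_mul hA_one)
    (HomCoalg.ext hC_str hC_comul hC_counit) mM cM hstr]
  exact (forall_congr' compat_iff).trans mM.str.surjective.forall.symm

/-- `M` is a Doi Hom-Hopf module over the Doi Hom-Hopf datum
`(H^op ⊗ H, H, H)` iff `M` is a right-right Hom-Yetter-Drinfeld module over `(H, α)`. -/
theorem doiModule_iff_yetterDrinfeld {k : Type*} [CommRing k] {H M : Type*}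
    [AddCommGroup H] [Module k H] [AddCommGroup M] [Module k M]
    (hH : HomHopf k H) (hS : Function.Bijective hH.S)
    (hD : HomBialg k (H ⊗[k] H))
    (hD_str : hD.str = TensorProduct.congr hH.str hH.str)
    (hD_mul : hD.mul = opMul hH)
    (hD_one : hD.one = hH.one ⊗ₜ[k] hH.one)
    (hD_comul : hD.comul = opComul hH)
    (hD_counit : hD.counit = opCounit hH)
    (hA : HomComodAlg hD H)
    (hA_str : hA.str = hH.str) (hA_mul : hA.mul = hH.mul) (hA_one : hA.one = hH.one)
    (hA_coact : hA.coact = opCoact hH)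
    (hC : HomModCoalg hD H)
    (hC_str : hC.str = hH.str) (hC_comul : hC.comul = hH.comul)
    (hC_counit : hC.counit = hH.counit) (hC_act : hC.act = opAct hH)
    (μ : M ≃ₗ[k] M)
    (mM : HomMod hH.toHomBialg.toHomAlg M) (cM : HomComod hH.toHomBialg.toHomCoalg M)
    (hm : mM.str = μ) (hc : cM.str = μ) :
    (∃ d : DoiMod hA hC M, d.str = μ ∧ d.act = mM.act ∧ d.coact = cM.coact) ↔
    (∀ (m : M) (h : H),
        TensorProduct.map₂ mM.act hH.mul (cM.coact m) (hH.comul h) =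
          TensorProduct.map mM.str.toLinearMap (TensorProduct.lift hH.mul)
            ((TensorProduct.assoc k M H H)
              (TensorProduct.map (TensorProduct.comm k H M).toLinearMap LinearMap.id
                ((TensorProduct.assoc k H M H).symm
                  (TensorProduct.map LinearMap.id (cM.coact ∘ₗ mM.act (mM.str.symm m))
                    (hH.comul h)))))) := by
  subst hm
  exact doiModule_iff_yetterDrinfeld_general hH hD hD_str hD_mul hD_one hD_comul hD_counit
    hA hA_str hA_mul hA_one hA_coact hC hC_str hC_comul hC_counit hC_act mM cM hc
end

section
/- Let k be a field and (H, α) a finite-dimensional monoidal Hom-Hopf algebra with bijective antipode S. Consider the Doi Hom-Hopf datum (H, k, H), where A = k (with β = id, unit 1 and multiplication of k) is a right (H,α)-Hom-comodule algebra via the coaction λ ↦ λ⊗1_H, and C = H is a right (H,α)-Hom-module coalgebra via the multiplication of H. If θ : H⊗H → k is a normalized k-integral for this datum, then the linear functional φ : H → k defined by φ(h) = θ(1_H⊗h) is a right integral on H*, i.e. φ(h₁)h*(h₂) = h*(1_H)φ(h) for all h* ∈ H* and h ∈ H, and φ∘α = φ. -/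
open TensorProduct

open DoiHomHopf

/-!
At a group-like element `e` the right-hand side of condition (4.1) has a single term. When the
coaction on `A` is trivial, which in the Hom-setting means `a ↦ β⁻¹(a) ⊗ 1_H`, that term is
`θ(e ⊗ γ⁻¹(c)) ⊗ γ(e)`. So (4.1) becomes the invariance identity of a right integral, up to a twist
by `γ` on the second tensor factor, which is undone by applying `γ⁻¹`.
-/

namespace DoiHomHopf.NIntegral

variable {k : Type*} [CommRing k] {H A C : Type*}
  [AddCommGroup H] [Module k H] [AddCommGroup A] [Module k A] [AddCommGroup C] [Module k C]
  {hH : HomBialg k H} {hA : HomComodAlg hH A} {hC : HomModCoalg hH C} (n : NIntegral hA hC)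

theorem curry_apply_str {e : C} (he_str : hC.str e = e) (c : C) :
    curry n.θ e (hC.str c) = hA.str (curry n.θ e c) := by
  simpa [he_str] using n.θ_str e c

theorem curry_apply_str_symm {e : C} (he_str : hC.str e = e) (c : C) :
    curry n.θ e (hC.str.symm c) = hA.str.symm (curry n.θ e c) := by
  rw [LinearEquiv.eq_symm_apply, ← n.curry_apply_str he_str, LinearEquiv.apply_symm_apply]

theorem map_curry_str_comul_of_comul_eq_tmul_self
    (hA_coact : ∀ a, hA.coact a = hA.str.symm a ⊗ₜ[k] hH.one)
    {e : C} (he_comul : hC.comul e = e ⊗ₜ[k] e) (c : C) :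
    map (curry n.θ (hC.str.symm e)) hC.str.toLinearMap (hC.comul c) =
      curry n.θ e (hC.str.symm c) ⊗ₜ[k] hC.str e := by
  simpa [he_comul, hA_coact, hC.act_one] using n.cond1 c e

theorem map_curry_comul_of_comul_eq_tmul_self
    (hA_coact : ∀ a, hA.coact a = hA.str.symm a ⊗ₜ[k] hH.one)
    {e : C} (he_comul : hC.comul e = e ⊗ₜ[k] e) {N : Type*} [AddCommGroup N] [Module k N]
    (f : C →ₗ[k] N) (c : C) :
    map (curry n.θ (hC.str.symm e)) f (hC.comul c) = curry n.θ e (hC.str.symm c) ⊗ₜ[k] f e := by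
  have f_untwist : (f ∘ₗ hC.str.symm.toLinearMap) ∘ₗ hC.str.toLinearMap = f := by
    ext x
    simp
  calc map (curry n.θ (hC.str.symm e)) f (hC.comul c)
      = map LinearMap.id (f ∘ₗ hC.str.symm.toLinearMap)
          (map (curry n.θ (hC.str.symm e)) hC.str.toLinearMap (hC.comul c)) := by
        rw [map_map, f_untwist, LinearMap.id_comp]
    _ = curry n.θ e (hC.str.symm c) ⊗ₜ[k] f e := by
        rw [n.map_curry_str_comul_of_comul_eq_tmul_self hA_coact he_comul, map_tmul]
        simp

end DoiHomHopf.NIntegral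

theorem integral_of_nIntegral_general {k : Type*} [CommRing k] {H A C : Type*}
    [AddCommGroup H] [Module k H] [AddCommGroup A] [Module k A] [AddCommGroup C] [Module k C]
    {hH : HomBialg k H} {hA : HomComodAlg hH A} {hC : HomModCoalg hH C} (n : NIntegral hA hC)
    (hA_coact : ∀ a, hA.coact a = hA.str.symm a ⊗ₜ[k] hH.one)
    {e : C} (he_str : hC.str e = e) (he_comul : hC.comul e = e ⊗ₜ[k] e)
    {N : Type*} [AddCommGroup N] [Module k N] :
    (∀ (f : C →ₗ[k] N) (c : C),
        map (curry n.θ e) f (hC.comul c) = hA.str.symm (curry n.θ e c) ⊗ₜ[k] f e) ∧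
    (∀ c : C, curry n.θ e (hC.str c) = hA.str (curry n.θ e c)) := by
  refine ⟨fun f c => ?_, n.curry_apply_str he_str⟩
  have he_symm : hC.str.symm e = e := by rw [LinearEquiv.symm_apply_eq, he_str]
  rw [← n.curry_apply_str_symm he_str,
    ← n.map_curry_comul_of_comul_eq_tmul_self hA_coact he_comul, he_symm]

/-- For the Doi Hom-Hopf datum `(H, k, H)`, if `θ : H ⊗ H → k` is a
normalized `k`-integral, then `φ(h) = θ(1_H ⊗ h)` is a right integral on `H*`. -/
theorem integral_of_nIntegral {k : Type*} [Field k] {H : Type*}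
    [AddCommGroup H] [Module k H] [FiniteDimensional k H]
    (hH : HomHopf k H) (hS : Function.Bijective hH.S)
    (hA : HomComodAlg hH.toHomBialg k)
    (hA_str : hA.str = LinearEquiv.refl k k)
    (hA_mul : hA.mul = LinearMap.mul k k)
    (hA_one : hA.one = 1)
    (hA_coact : hA.coact = (TensorProduct.mk k k H).flip hH.one)
    (hC : HomModCoalg hH.toHomBialg H)
    (hC_str : hC.str = hH.str) (hC_comul : hC.comul = hH.comul)
    (hC_counit : hC.counit = hH.counit) (hC_act : hC.act = hH.mul)
    (n : NIntegral hA hC) :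
    (∀ (f : H →ₗ[k] k) (h : H),
        TensorProduct.lid k k
          (TensorProduct.map (TensorProduct.curry n.θ hH.one) f (hH.comul h)) =
          f hH.one * TensorProduct.curry n.θ hH.one h) ∧
    (∀ h : H, TensorProduct.curry n.θ hH.one (hH.str h) = TensorProduct.curry n.θ hH.one h) := by
  obtain ⟨invariant, str_invariant⟩ := integral_of_nIntegral_general n (N := k) (e := hH.one)
    (by simp [hA_coact, hA_str]) (by rw [hC_str, hH.str_one]) (by rw [hC_comul, hH.comul_one])
  exact ⟨fun f h => by simp [← hC_comul, invariant, hA_str, mul_comm],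
    by simpa [hA_str, hC_str] using str_invariant⟩
end
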